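/- Fix an integer q ≥ 2. Let A = ((q+1) − Real.sqrt ((q+1)^2 − 4))/2, let D = ((q−1)^(3*(q−1)) * (q−A)^(q−A)) / (q^(2*q) * A^A * (1−A)^(2*(1−A)) * (q−2+A)^(q−2+A) * (q−1−A)^(q−1−A)) (real powers), and let B(q) = 2*q / (Real.log (1/D) / Real.log 2). Then for every real ε > 0 there exists N such that for all n ≥ N there is a k with k ≤ B(q)·(1+ε)·(log n / log 2) and a 3-covering array with k rows and n columns over the alphabet Fin q. -/

import Mathlib

section
open Finset

lemma ca_choose_lower (q m : ℕ) (hq : 2 ≤ q) :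
    (q:ℝ)^(q*m) ≤ (q*m+1) * ((q:ℝ)-1)^((q-1)*m) * ((q*m).choose m) := by
  obtain ⟨p, rfl⟩ : ∃ p, q = p + 1 := ⟨q-1, by omega⟩
  have hp : 1 ≤ p := by omega
  set N := (p+1)*m with hN
  let t : ℕ → ℕ := fun i => p^(N-i) * N.choose i
  have up : ∀ i, i < m → t i ≤ t (i+1) := by
    intro i hi
    have hiN : i + 1 ≤ N := by rw [hN]; nlinarith
    have h1 := Nat.choose_succ_right_eq N i
    have h2 : p * (i+1) ≤ N - i := by
      have : p*(i+1) + i ≤ N := by rw [hN]; nlinarith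
      omega
    have h3 : N - i = (N-(i+1)) + 1 := by omega
    simp only [t]
    rw [h3, pow_succ, mul_assoc]
    apply Nat.mul_le_mul_left
    apply Nat.le_of_mul_le_mul_right (c := i+1) _ (by omega)
    rw [h1]
    calc p * N.choose i * (i+1) = N.choose i * (p*(i+1)) := by ring
      _ ≤ _ := Nat.mul_le_mul_left _ h2
  have down : ∀ i, m ≤ i → i < N → t (i+1) ≤ t i := by
    intro i hi hiN
    have h1 := Nat.choose_succ_right_eq N i
    have h2 : N - i ≤ p * (i+1) := by
      have : N ≤ p*(i+1) + i := by rw [hN]; nlinarith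
      omega
    have h3 : N - i = (N-(i+1)) + 1 := by omega
    simp only [t]
    rw [h3, pow_succ, mul_assoc]
    apply Nat.mul_le_mul_left
    apply Nat.le_of_mul_le_mul_right (c := i+1) _ (by omega)
    rw [h1]
    calc _ ≤ N.choose i * (p*(i+1)) := Nat.mul_le_mul_left _ h2
      _ = p * N.choose i * (i+1) := by ring
  have up' : ∀ d, d ≤ m → t (m-d) ≤ t m := by
    intro d
    induction d with
    | zero => intro _; simp
    | succ d ih =>
      intro h
      refine le_trans (up _ (by omega)) ?_
      rw [show m - (d+1) + 1 = m - d by omega]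
      exact ih (by omega)
  have down' : ∀ d, m + d ≤ N → t (m+d) ≤ t m := by
    intro d
    induction d with
    | zero => intro _; simp
    | succ d ih =>
      intro h
      exact le_trans (down (m+d) (by omega) (by omega)) (ih (by omega))
  have all : ∀ i, i ≤ N → t i ≤ t m := by
    intro i hi
    rcases le_total i m with h | h
    · have := up' (m-i) (by omega)
      rwa [show m-(m-i) = i by omega] at this
    · have := down' (i-m) (by omega)
      rwa [show m+(i-m) = i by omega] at this
  have key : (p+1)^N ≤ (N+1) * t m := by
    have := add_pow 1 p N
    rw [add_comm p 1, this]
    refine le_trans (Finset.sum_le_card_nsmul _ _ (t m) ?_) (by simp)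
    intro i hi
    have := all i (by simpa [Nat.lt_succ_iff] using hi)
    simpa [t] using this
  have hNm : N - m = p*m := by rw [hN]; rw [add_mul]; omega
  simp only [t, hNm] at key
  have k2 : (((p+1)^N : ℕ):ℝ) ≤ (((N+1)*(p^(p*m)*N.choose m) : ℕ):ℝ) := by exact_mod_cast key
  push_cast at k2 ⊢
  simp only [hN] at k2 ⊢
  push_cast at k2 ⊢
  simpa [mul_assoc] using k2

lemma ca_choose_upper (N m : ℕ) (t : ℝ) (ht : 0 ≤ t) : (N.choose m : ℝ) * t^m ≤ (1+t)^N := by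
  rcases le_or_gt m N with h | h
  · rw [add_comm, add_pow]
    have := Finset.single_le_sum (f := fun i => t^i * 1^(N-i) * (N.choose i:ℝ)) (s := range (N+1))
      (fun i _ => by positivity) (a := m) (by simp; omega)
    simpa [mul_comm] using this
  · rw [Nat.choose_eq_zero_of_lt h]; simp; positivity

lemma ca_triples {R : Type} [Fintype R] [DecidableEq R] (q m : ℕ) (hq : 2 ≤ q)
    (hR : Fintype.card R = q*m) (Y1 : Finset R) (hY : #Y1 = m) (s : ℝ) (hs : 0 < s) :
    (∑ Y2 ∈ powersetCard m (univ : Finset R), ∑ Y3 ∈ powersetCard m (univ : Finset R),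
      (if Y1 ∩ Y2 ∩ Y3 = ∅ then (1:ℝ) else 0)) * (s^2)^m ≤ 
      (1+2*s)^m * ((1+s)^2)^((q-1)*m) := by
  have hs1 : 0 < 1 + s := by linarith
  have inner : ∀ Y2 ∈ powersetCard m (univ : Finset R),
      (∑ Y3 ∈ powersetCard m (univ : Finset R),
      (if Y1 ∩ Y2 ∩ Y3 = ∅ then (1:ℝ) else 0)) * (s^2)^m ≤ (1+s)^(q*m) * 
        ∏ i ∈ Y2, (s * if i ∈ Y1 then (1+s)⁻¹ else 1) := by
    intro Y2 h2
    have h2c : #Y2 = m := (mem_powersetCard.1 h2).2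
    have e1 : (∑ Y3 ∈ powersetCard m (univ : Finset R),
      (if Y1 ∩ Y2 ∩ Y3 = ∅ then (1:ℝ) else 0)) = ((q*m - #(Y1 ∩ Y2)).choose m : ℝ) := by
      rw [← Finset.sum_filter]
      have : (powersetCard m (univ : Finset R)).filter (fun Y3 => Y1 ∩ Y2 ∩ Y3 = ∅)
          = powersetCard m (Y1 ∩ Y2)ᶜ := by
        ext Y
        simp only [mem_filter, mem_powersetCard, subset_univ, true_and]
        rw [← Finset.disjoint_iff_inter_eq_empty, Finset.subset_compl_iff_disjoint_left, and_comm]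
      rw [this]
      rw [sum_const, nsmul_eq_mul, mul_one, card_powersetCard, card_compl, hR]
    have e2 : ∏ i ∈ Y2, (s * if i ∈ Y1 then (1+s)⁻¹ else 1) = s^m * ((1+s)⁻¹)^#(Y1 ∩ Y2) := by
      rw [prod_mul_distrib, prod_const, h2c, prod_ite]
      simp [Finset.filter_mem_eq_inter, inter_comm]
    rw [e1, e2]
    have h := ca_choose_upper (q*m - #(Y1 ∩ Y2)) m s hs.le
    have hj : #(Y1 ∩ Y2) ≤ q*m := by rw [← hR]; exact card_le_univ _
    have e3 : (1+s)^(q*m) = (1+s)^(q*m - #(Y1 ∩ Y2)) * (1+s)^#(Y1 ∩ Y2) := by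
      rw [← pow_add]; congr 1; omega
    rw [e3, inv_pow]
    have : (0:ℝ) < (1+s)^#(Y1 ∩ Y2) := by positivity
    calc _ = ((q*m - #(Y1 ∩ Y2)).choose m : ℝ) * s^m * s^m := by ring
      _ ≤ (1+s)^(q*m - #(Y1 ∩ Y2)) * s^m := by gcongr
      _ = _ := by field_simp
  rw [sum_mul]
  refine (sum_le_sum inner).trans ?_
  rw [← mul_sum]
  have e4 : ∑ Y2 ∈ powersetCard m (univ : Finset R), ∏ i ∈ Y2, (s * if i ∈ Y1 then (1+s)⁻¹ else 1)
      ≤ ∏ i : R, (1 + (s * if i ∈ Y1 then (1+s)⁻¹ else 1)) := by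
    rw [Finset.prod_one_add]
    apply sum_le_sum_of_subset_of_nonneg
    · intro Y _; simp
    · intro Y _ _
      apply prod_nonneg
      intro i _
      split_ifs <;> positivity
  have e5 : ∏ i : R, (1 + (s * if i ∈ Y1 then (1+s)⁻¹ else 1)) = 
      (1 + s*(1+s)⁻¹)^m * (1+s)^((q-1)*m) := by
    have : ∀ i : R, (1 + (s * if i ∈ Y1 then (1+s)⁻¹ else 1)) = 
      if i ∈ Y1 then (1 + s*(1+s)⁻¹) else 1+s := by intro i; split_ifs <;> simp
    simp_rw [this]
    rw [prod_ite, prod_const, prod_const]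
    have h1 : (univ.filter (· ∈ Y1)) = Y1 := by ext; simp
    have h2 : (univ.filter (· ∉ Y1)) = Y1ᶜ := by ext; simp
    rw [h1, h2, hY, card_compl, hR, hY, Nat.sub_mul, one_mul]
  rw [e5] at e4
  calc _ ≤ (1+s)^(q*m) * ((1 + s*(1+s)⁻¹)^m * (1+s)^((q-1)*m)) := by gcongr
    _ = _ := by
      have : q*m = m + (q-1)*m := by 
        obtain ⟨p, rfl⟩ : ∃ p, q = p + 1 := ⟨q-1, by omega⟩
        simp; ring
      rw [this, pow_add]
      have e6 : 1 + 2*s = (1+s) * (1 + s*(1+s)⁻¹) := by field_simp; ring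
      rw [e6, mul_pow, ← pow_mul (1+s) 2]; ring

set_option maxHeartbeats 2000000 in
lemma ca_logs (q : ℕ) (hq : 2 ≤ q)
    (A : ℝ) (hA : A = (((q : ℝ) + 1) - Real.sqrt (((q : ℝ) + 1) ^ 2 - 4)) / 2)
    (D : ℝ)
    (hD : D = (((q : ℝ) - 1) ^ (3 * ((q : ℝ) - 1)) * ((q : ℝ) - A) ^ ((q : ℝ) - A)) /
      ((q : ℝ) ^ (2 * (q : ℝ)) * A ^ A * (1 - A) ^ (2 * (1 - A)) *
        ((q : ℝ) - 2 + A) ^ ((q : ℝ) - 2 + A) * ((q : ℝ) - 1 - A) ^ ((q : ℝ) - 1 - A))) :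
    0 < D ∧ D < 1 ∧ ∃ s : ℝ, 0 < s ∧
      (1+2*s) * ((1+s)^2)^(q-1) * (((q:ℝ)-1)^(q-1))^2 = s^2 * D * ((q:ℝ)^q)^2 := by
  have hq' : (2:ℝ) ≤ q := by exact_mod_cast hq
  have hquad : A^2 - (q+1)*A + 1 = 0 := by
    have := Real.sq_sqrt (show (0:ℝ) ≤ ((q : ℝ) + 1) ^ 2 - 4 by nlinarith)
    rw [hA]; nlinarith
  have hA2 : A ≤ ((q:ℝ)+1)/2 := by
    have := Real.sqrt_nonneg (((q : ℝ) + 1) ^ 2 - 4)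
    rw [hA]; linarith
  have hA0 : 0 < A := by
    by_contra h
    nlinarith
  have hA1 : A < 1 := by
    by_contra h
    push Not at h
    nlinarith
  clear hA
  have h1 : 0 < (q:ℝ) - 1 := by linarith
  have h2 : 0 < (q:ℝ) - A := by linarith
  have h3 : 0 < (1:ℝ) - A := by linarith
  have h4 : 0 < (q:ℝ) - 2 + A := by linarith
  have h5 : 0 < (q:ℝ) - 1 - A := by linarith
  have hq0 : (0:ℝ) < q := by linarith
  have hD0 : 0 < D := by rw [hD]; positivity
  have hlog : Real.log D = 3 * ((q : ℝ) - 1) * Real.log ((q:ℝ)-1) + (q-A) * Real.log (q-A)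
     - (2 * q * Real.log q + A * Real.log A + 2*(1-A) * Real.log (1-A)
        + ((q : ℝ) - 2 + A) * Real.log ((q : ℝ) - 2 + A) + ((q : ℝ) - 1 - A) * Real.log ((q : ℝ) - 1 - A)) := by
    rw [hD, Real.log_div (by positivity) (by positivity), Real.log_mul (by positivity) (by positivity),
      Real.log_mul (by positivity) (by positivity), Real.log_mul (by positivity) (by positivity),
      Real.log_mul (by positivity) (by positivity), Real.log_mul (by positivity) (by positivity)]
    rw [Real.log_rpow h1, Real.log_rpow h2, Real.log_rpow hq0, Real.log_rpow hA0, Real.log_rpow h3,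
      Real.log_rpow h4, Real.log_rpow h5]
  have gibbs : ∀ w u : ℝ, 0 < w → 0 < u → w * (Real.log u - Real.log w) ≤ u - w := by
    intro w u hw hu
    rw [← Real.log_div hu.ne' hw.ne']
    have := Real.log_le_sub_one_of_pos (div_pos hu hw)
    calc _ ≤ w * (u/w - 1) := by gcongr
      _ = _ := by field_simp
  refine ⟨hD0, ?_, 1/((q:ℝ)-1-A), by positivity, ?_⟩
  · rw [← Real.log_neg_iff hD0] 
    have g1 := gibbs A (1/q) hA0 (by positivity)
    have g2 := gibbs (1-A) ((q-1)/q) h3 (by positivity)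
    have g4 := gibbs (q-2+A) ((q-1)*(q-1)/q) h4 (by positivity)
    have g5 := gibbs (q-1-A) ((q-A)*(q-1)/q) h5 (by positivity)
    have g6 := gibbs 1 ((q-A)/q) (by norm_num) (by positivity)
    have g7 : A * (Real.log (q-1) - Real.log q) < 0 := by
      have := Real.log_lt_log h1 (show (q:ℝ) - 1 < q by linarith)
      nlinarith
    rw [Real.log_div (by positivity) (by positivity), Real.log_one] at g1
    rw [Real.log_div (by positivity) (by positivity)] at g2 g6
    rw [Real.log_div (by positivity) (by positivity), Real.log_mul (by positivity) (by positivity)] at g4 g5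
    rw [Real.log_one] at g6
    have hs : (1/(q:ℝ) - A) + 2 * (((q:ℝ)-1)/q - (1-A)) + (((q:ℝ)-1)*(q-1)/q - (q-2+A)) + 
      (((q:ℝ)-A)*(q-1)/q - (q-1-A)) + (((q:ℝ)-A)/q - 1) = 0 := by
      field_simp; ring
    rw [hlog]
    linarith
  · have i1 : (q:ℝ) - 2 + A = (1-A)*(q-1-A) := by linear_combination -hquad
    have i2 : (q:ℝ) - A = (1-A)/A := by field_simp; nlinarith
    have i3 : (1-A)^2 = (q-1)*A := by nlinarith
    have i4 : (q:ℝ) + 1 - A = 1/A := by field_simp; nlinarith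
    have l1 := congrArg Real.log i1
    have l2 := congrArg Real.log i2
    have l3 := congrArg Real.log i3
    have l4 := congrArg Real.log i4
    rw [Real.log_mul (by positivity) (by positivity)] at l1 l3
    rw [Real.log_div (by positivity) (by positivity)] at l2 l4
    rw [Real.log_pow] at l3
    rw [Real.log_one] at l4
    have j1 : 1 + 2 * (1/((q:ℝ)-1-A)) = (q+1-A)/(q-1-A) := by field_simp; ring
    have j2 : 1 + (1/((q:ℝ)-1-A)) = (q-A)/(q-1-A) := by field_simp; ring
    have h6 : 0 < (q:ℝ) + 1 - A := by linarith
    rw [j1, j2]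
    apply Real.log_injOn_pos (Set.mem_Ioi.2 (by positivity)) (Set.mem_Ioi.2 (by positivity))
    have hc : ((q-1:ℕ):ℝ) = q - 1 := by push_cast [Nat.cast_sub (show 1 ≤ q by omega)]; ring
    rw [Real.log_mul (by positivity) (by positivity), Real.log_mul (by positivity) (by positivity),
      Real.log_mul (by positivity) (by positivity), Real.log_mul (by positivity) (by positivity)]
    simp only [Real.log_pow]
    rw [Real.log_div (by positivity) (by positivity), Real.log_div (by positivity) (by positivity),
     Real.log_div (by positivity) (by positivity), hlog, hc, Real.log_one, l1, l2, l4]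
    push_cast at l3 ⊢
    linear_combination ((q:ℝ)-1) * l3

lemma ca_asymp (q : ℕ) (hq : 2 ≤ q) (D : ℝ) (hD0 : 0 < D) (hD1 : D < 1) (ε : ℝ) (hε : 0 < ε) :
    ∃ N : ℕ, ∀ n : ℕ, N ≤ n → ∃ m : ℕ,
      (m:ℝ) ≤ 2 * (1+ε) * Real.log n / Real.log (1/D) ∧ 
        8 * (n:ℝ)^2 * (q:ℝ)^3 * ((q*m+1)^2 * D^m) ≤ 1 := by
  set lam := Real.log (1/D) with hlam
  have hl : 0 < lam := Real.log_pos (by rw [lt_div_iff₀ hD0]; linarith)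
  have hlD : Real.log D = - lam := by rw [hlam, one_div, Real.log_inv]; ring
  set κ := 2*(1+ε)/lam with hκ
  have hκ0 : 0 < κ := by positivity
  have T : Filter.Tendsto (fun y : ℝ => (8 * (q:ℝ)^3 * D⁻¹ * (q*κ+1)^2) * (y^2 * Real.exp (-(2*ε) * y))) 
      Filter.atTop (nhds ((8 * (q:ℝ)^3 * D⁻¹ * (q*κ+1)^2) * 0)) := by
    apply Filter.Tendsto.const_mul
    have := tendsto_rpow_mul_exp_neg_mul_atTop_nhds_zero 2 (2*ε) (by positivity)
    simpa using this
  rw [mul_zero] at T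
  have T2 := T.comp (Real.tendsto_log_atTop.comp tendsto_natCast_atTop_atTop)
  have E1 := T2.eventually (ge_mem_nhds (show (0:ℝ) < 1 by norm_num))
  have E2 := (Real.tendsto_log_atTop.comp tendsto_natCast_atTop_atTop).eventually_ge_atTop (1:ℝ)
  obtain ⟨N, hN⟩ := Filter.eventually_atTop.1 (E1.and (E2.and (Filter.eventually_ge_atTop 1)))
  refine ⟨N, fun n hn => ?_⟩
  obtain ⟨a1, a2, a3⟩ := hN n hn
  simp only [Function.comp] at a1 a2
  have hn0 : (0:ℝ) < n := by exact_mod_cast a3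
  set y := Real.log n with hy
  have hX : 0 ≤ κ * y := by positivity
  refine ⟨⌊κ * y⌋₊, ?_, ?_⟩
  · refine (Nat.floor_le hX).trans (le_of_eq ?_)
    rw [hκ]; ring
  · set m := ⌊κ * y⌋₊
    have m1 : (m:ℝ) ≤ κ * y := Nat.floor_le hX
    have m2 : κ * y - 1 ≤ m := (Nat.sub_one_lt_floor _).le
    have d1 : D^m ≤ D⁻¹ * Real.exp (-(2*(1+ε)) * y) := by
      have e1 : D^m = Real.exp (m * -lam) := by rw [← hlD, mul_comm, Real.exp_mul, Real.exp_log hD0]; simp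
      have e2 : D⁻¹ = Real.exp lam := by rw [hlam, one_div, Real.exp_log (by positivity)]
      rw [e1, e2, ← Real.exp_add]
      apply Real.exp_le_exp.2
      have : κ * lam = 2*(1+ε) := by rw [hκ]; field_simp
      nlinarith
    have d2 : (n:ℝ)^2 * Real.exp (-(2*(1+ε)) * y) = Real.exp (-(2*ε)*y) := by
      have : (n:ℝ) = Real.exp y := by rw [hy, Real.exp_log hn0]
      rw [this, ← Real.exp_nat_mul, ← Real.exp_add]; congr 1; push_cast; ring
    have d3 : (q:ℝ)*m+1 ≤ (q*κ+1)*y := by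
      have : (q:ℝ)*m ≤ q*(κ*y) := by gcongr
      nlinarith
    calc _ ≤ 8 * (n:ℝ)^2 * (q:ℝ)^3 * (((q*κ+1)*y)^2 * (D⁻¹ * Real.exp (-(2*(1+ε)) * y))) := by gcongr
      _ = (8 * (q:ℝ)^3 * D⁻¹ * (q*κ+1)^2) * (y^2 * ((n:ℝ)^2 * Real.exp (-(2*(1+ε)) * y))) := by ring
      _ ≤ 1 := by rw [d2]; exact a1

def caFib (q m : ℕ) (σ : Equiv.Perm (Fin q × Fin m)) (a : Fin q) : Finset (Fin q × Fin m) :=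
  univ.filter (fun r => (σ r).1 = a)

lemma caFib_card (q m : ℕ) (σ : Equiv.Perm (Fin q × Fin m)) (a : Fin q) : #(caFib q m σ a) = m := by
  have : (caFib q m σ a) = (univ.image (fun j : Fin m => σ.symm (a, j))) := by
    ext r
    simp only [caFib, mem_filter, mem_univ, true_and, mem_image]
    constructor
    · intro h; exact ⟨(σ r).2, by rw [← h]; simp⟩
    · rintro ⟨j, rfl⟩; simp
  rw [this, card_image_of_injective]
  · simp
  · intro i j h; simpa using h

lemma mem_caFib (q m : ℕ) (σ : Equiv.Perm (Fin q × Fin m)) (a : Fin q) (r : Fin q × Fin m) :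
    r ∈ caFib q m σ a ↔ (σ r).1 = a := by simp [caFib]

lemma caFib_mul (q m : ℕ) (σ τ : Equiv.Perm (Fin q × Fin m)) (a : Fin q) :
    caFib q m (σ * τ) a = (caFib q m σ a).map τ.symm.toEmbedding := by
  ext r
  rw [Finset.mem_map_equiv]
  simp only [mem_caFib, Equiv.symm_symm, Equiv.Perm.mul_apply]

lemma caFib_avg (q m : ℕ) (a : Fin q) (F : Finset (Fin q × Fin m) → ℝ) :
    (∑ σ : Equiv.Perm (Fin q × Fin m), F (caFib q m σ a)) * ((q*m).choose m) =
     (Fintype.card (Equiv.Perm (Fin q × Fin m))) * ∑ Y ∈ powersetCard m univ, F Y := by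
  classical
  let cnt : Finset (Fin q × Fin m) → ℕ := fun Y => #(univ.filter (fun σ => caFib q m σ a = Y))
  let Y0 := caFib q m 1 a
  have hcnt : ∀ Y ∈ powersetCard m (univ : Finset (Fin q × Fin m)), cnt Y = cnt Y0 := by
    intro Y hY
    have hYc : #Y = #Y0 := by rw [(mem_powersetCard.1 hY).2, caFib_card]
    let e : {x // x ∈ Y} ≃ {x // x ∈ Y0} := Finset.equivOfCardEq hYc
    let τ : Equiv.Perm (Fin q × Fin m) := e.extendSubtype
    have hτ : Y0.map τ.symm.toEmbedding = Y := by
      ext r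
      rw [Finset.mem_map_equiv]
      simp only [Equiv.symm_symm]
      constructor
      · intro h
        by_contra h'
        exact Equiv.extendSubtype_not_mem e r h' h
      · intro h
        exact Equiv.extendSubtype_mem e r h
    symm
    apply Finset.card_bij (fun σ _ => σ * τ)
    · intro σ hσ
      simp only [mem_filter, mem_univ, true_and] at hσ ⊢
      rw [caFib_mul, hσ, hτ]
    · intro σ _ σ' _ h
      simpa using h
    · intro σ hσ
      simp only [mem_filter, mem_univ, true_and] at hσ ⊢
      refine ⟨σ * τ⁻¹, ?_, by simp⟩
      rw [caFib_mul, hσ, ← hτ]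
      ext r
      simp [Finset.mem_map_equiv]
  have hmaps : ∀ σ ∈ (univ : Finset (Equiv.Perm (Fin q × Fin m))),
      caFib q m σ a ∈ powersetCard m (univ : Finset (Fin q × Fin m)) := by
    intro σ _
    rw [mem_powersetCard]; exact ⟨subset_univ _, caFib_card q m σ a⟩
  have h1 : (∑ σ : Equiv.Perm (Fin q × Fin m), F (caFib q m σ a)) = 
      cnt Y0 * ∑ Y ∈ powersetCard m univ, F Y := by
    rw [← Finset.sum_fiberwise_of_maps_to hmaps, mul_sum]
    apply sum_congr rfl
    intro Y hY
    rw [← hcnt Y hY]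
    rw [Finset.sum_congr rfl (g := fun _ => F Y)]
    · simp [cnt]
    · intro σ hσ; rw [(mem_filter.1 hσ).2]
  have h2 : Fintype.card (Equiv.Perm (Fin q × Fin m)) = cnt Y0 * (q*m).choose m := by
    rw [← Finset.card_univ, Finset.card_eq_sum_card_fiberwise hmaps, Finset.sum_congr rfl hcnt]
    simp [mul_comm]
  rw [h1, h2]; push_cast; ring

def caBad (q m : ℕ) (g : Fin 3 → Equiv.Perm (Fin q × Fin m)) (w : Fin 3 → Fin q) : Prop :=
  ∀ r, ¬ ∀ i, (g i r).1 = w i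

open Classical in
lemma caBad_count (q m : ℕ) (P : ℝ) 
    (hP : ∀ Y1 : Finset (Fin q × Fin m), #Y1 = m → 
      (∑ Y2 ∈ powersetCard m (univ : Finset (Fin q × Fin m)), ∑ Y3 ∈ powersetCard m univ,
      (if Y1 ∩ Y2 ∩ Y3 = ∅ then (1:ℝ) else 0)) ≤ P * ((q*m).choose m : ℝ)^2) (w : Fin 3 → Fin q) :
    (#(univ.filter (fun g => caBad q m g w)) : ℝ) ≤
      P * (Fintype.card (Equiv.Perm (Fin q × Fin m)) : ℝ)^3 := by
  set V := Equiv.Perm (Fin q × Fin m)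
  set C : ℝ := ((q*m).choose m : ℝ) with hC
  have hqpos : 0 < q := (w 0).pos
  have hCpos : 0 < C := by
    rw [hC]; exact_mod_cast Nat.choose_pos (Nat.le_mul_of_pos_left m hqpos)
  have e1 : (#(univ.filter (fun g => caBad q m g w)) : ℝ) = 
     ∑ σ1 : V, ∑ σ2 : V, ∑ σ3 : V, 
      (if caFib q m σ1 (w 0) ∩ caFib q m σ2 (w 1) ∩ caFib q m σ3 (w 2) = ∅ then (1:ℝ) else 0) := by
    have : (#(univ.filter (fun g => caBad q m g w)) : ℝ) = 
        ∑ g : Fin 3 → V, if caBad q m g w then (1:ℝ) else 0 := by rw [Finset.sum_boole]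
    rw [this]
    let e : (V × V × V) ≃ (Fin 3 → V) := 
      { toFun := fun p => ![p.1, p.2.1, p.2.2]
        invFun := fun g => (g 0, g 1, g 2)
        left_inv := fun p => by simp
        right_inv := fun g => by funext i; fin_cases i <;> rfl }
    rw [← e.sum_comp, Fintype.sum_prod_type]
    apply sum_congr rfl; intro σ1 _
    rw [Fintype.sum_prod_type]
    apply sum_congr rfl; intro σ2 _
    apply sum_congr rfl; intro σ3 _
    congr 1
    rw [eq_iff_iff, Finset.eq_empty_iff_forall_notMem]
    simp [caBad, e, Fin.forall_fin_succ, caFib]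
  have e2 : (#(univ.filter (fun g => caBad q m g w)) : ℝ) * C^3 = 
     (Fintype.card V : ℝ)^3 * ∑ Y1 ∈ powersetCard m (univ : Finset (Fin q × Fin m)), 
        ∑ Y2 ∈ powersetCard m (univ : Finset (Fin q × Fin m)), ∑ Y3 ∈ powersetCard m univ,
      (if Y1 ∩ Y2 ∩ Y3 = ∅ then (1:ℝ) else 0) := by
    have a3 : ∀ X : Finset (Fin q × Fin m), (∑ σ3 : V, (if X ∩ caFib q m σ3 (w 2) = ∅ then (1:ℝ) else 0)) =
      (Fintype.card V : ℝ) / C * ∑ Y3 ∈ powersetCard m univ, (if X ∩ Y3 = ∅ then (1:ℝ) else 0) := by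
      intro X
      have := caFib_avg q m (w 2) (fun Y => if X ∩ Y = ∅ then (1:ℝ) else 0)
      rw [div_mul_eq_mul_div, eq_div_iff hCpos.ne']
      exact this
    have a2 : ∀ G : Finset (Fin q × Fin m) → ℝ, ∀ i, (∑ σ : V, G (caFib q m σ (w i))) =
      (Fintype.card V : ℝ) / C * ∑ Y ∈ powersetCard m univ, G Y := by
      intro G i
      rw [div_mul_eq_mul_div, eq_div_iff hCpos.ne']
      exact caFib_avg q m (w i) G
    rw [e1]
    have b2 : ∀ σ1 : V, (∑ σ2 : V, ∑ σ3 : V,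
      (if caFib q m σ1 (w 0) ∩ caFib q m σ2 (w 1) ∩ caFib q m σ3 (w 2) = ∅ then (1:ℝ) else 0)) =
      (Fintype.card V : ℝ) / C * ∑ Y2 ∈ powersetCard m univ,
     ((Fintype.card V : ℝ) / C * ∑ Y3 ∈ powersetCard m univ,
      (if caFib q m σ1 (w 0) ∩ Y2 ∩ Y3 = ∅ then (1:ℝ) else 0)) := by
      intro σ1
      rw [← a2 (fun Z => (Fintype.card V : ℝ) / C * ∑ Y3 ∈ powersetCard m univ,
        (if caFib q m σ1 (w 0) ∩ Z ∩ Y3 = ∅ then (1:ℝ) else 0)) 1]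
      exact sum_congr rfl (fun σ2 _ => a3 _)
    rw [sum_congr rfl (fun σ1 _ => b2 σ1)]
    rw [a2 (fun W => (Fintype.card V : ℝ) / C * ∑ Y2 ∈ powersetCard m univ,
     ((Fintype.card V : ℝ) / C * ∑ Y3 ∈ powersetCard m univ,
      (if W ∩ Y2 ∩ Y3 = ∅ then (1:ℝ) else 0))) 0]
    simp_rw [← mul_sum]
    field_simp
  have e3 : ∑ Y1 ∈ powersetCard m (univ : Finset (Fin q × Fin m)), 
        ∑ Y2 ∈ powersetCard m (univ : Finset (Fin q × Fin m)), ∑ Y3 ∈ powersetCard m univ,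
      (if Y1 ∩ Y2 ∩ Y3 = ∅ then (1:ℝ) else 0) ≤ C * (P * C^2) := by
    refine (sum_le_sum (fun Y1 h => hP Y1 (mem_powersetCard.1 h).2)).trans (le_of_eq ?_)
    simp [hC]
  have e4 : (#(univ.filter (fun g => caBad q m g w)) : ℝ) * C^3 ≤ (P * (Fintype.card V : ℝ)^3) * C^3 := by
    rw [e2]
    calc _ ≤ (Fintype.card V : ℝ)^3 * (C * (P * C^2)) := by gcongr
      _ = _ := by ring
  exact le_of_mul_le_mul_right e4 (by positivity)

open Classical in
lemma ca_marginal {V : Type} [Fintype V] (L : ℕ) (c : Fin 3 → Fin L) (hc : Function.Injective c)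
    (Q : (Fin 3 → V) → Prop) :
    #(univ.filter (fun M : Fin L → V => Q (M ∘ c))) * (Fintype.card V)^3 
      = (Fintype.card V)^L * #(univ.filter Q) := by
  have h1 : #(univ.filter (fun M : Fin L → V => Q (M ∘ c))) * (Fintype.card V)^3 = 
    #((univ.filter (fun M : Fin L → V => Q (M ∘ c))) ×ˢ (univ : Finset (Fin 3 → V))) := by
    rw [card_product]; simp
  have h2 : (Fintype.card V)^L * #(univ.filter Q) = 
    #((univ : Finset (Fin L → V)) ×ˢ (univ.filter Q)) := by
    rw [card_product]; simp
  rw [h1, h2]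
  have key : ∀ (M : Fin L → V) (g : Fin 3 → V), Function.extend c (M ∘ c) (Function.extend c g M) = M := by
    intro M g
    funext x
    by_cases hx : ∃ i, c i = x
    · obtain ⟨i, rfl⟩ := hx
      rw [hc.extend_apply]; rfl
    · rw [Function.extend_apply' _ _ _ hx, Function.extend_apply' _ _ _ hx]
  have key2 : ∀ (M : Fin L → V) (g : Fin 3 → V), (Function.extend c g M) ∘ c = g := by
    intro M g
    funext i
    simp [hc.extend_apply]
  apply Finset.card_nbij' (fun p => (Function.extend c p.2 p.1, p.1 ∘ c))
    (fun p => (Function.extend c p.2 p.1, p.1 ∘ c))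
  · rintro ⟨M, g⟩ h; simpa using h
  · rintro ⟨M, g⟩ h; simpa [key2] using h
  · rintro ⟨M, g⟩ h; simp [key, key2]
  · rintro ⟨M, g⟩ h; simp [key, key2]

open Classical in
lemma ca_select (q m n : ℕ) (P : ℝ) (hP0 : 0 ≤ P)
    (hP : ∀ w, (#(univ.filter (fun g => caBad q m g w)) : ℝ) ≤
      P * (Fintype.card (Equiv.Perm (Fin q × Fin m)) : ℝ)^3)
    (hsmall : 8 * (n:ℝ)^2 * (q:ℝ)^3 * P ≤ 1) :
    ∃ M : Fin (q*m) → Fin n → Fin q,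
          ∀ c : Fin 3 → Fin n, Function.Injective c →
            ∀ w : Fin 3 → Fin q, ∃ r : Fin (q*m), ∀ i : Fin 3, M r (c i) = w i := by
  set V := Equiv.Perm (Fin q × Fin m)
  have hV : (0:ℝ) < Fintype.card V := by exact_mod_cast Fintype.card_pos
  set L := 2*n
  let bad : (Fin L → V) → Finset ((Fin 3 → Fin L) × (Fin 3 → Fin q)) := fun M => 
    univ.filter (fun p => Function.Injective p.1 ∧ caBad q m (M ∘ p.1) p.2)
  have hsum : ∑ M : Fin L → V, (#(bad M) : ℝ) ≤ ∑ M : Fin L → V, (n:ℝ) := by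
    have s1 : ∑ M : Fin L → V, (#(bad M) : ℝ) = 
       ∑ p : (Fin 3 → Fin L) × (Fin 3 → Fin q), ∑ M : Fin L → V, 
        (if Function.Injective p.1 ∧ caBad q m (M ∘ p.1) p.2 then (1:ℝ) else 0) := by
      rw [sum_comm]
      apply sum_congr rfl; intro M _
      simp [bad]
    rw [s1]
    have s2 : ∀ p ∈ (univ : Finset ((Fin 3 → Fin L) × (Fin 3 → Fin q))), ∑ M : Fin L → V, 
        (if Function.Injective p.1 ∧ caBad q m (M ∘ p.1) p.2 then (1:ℝ) else 0) ≤ 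
          P * (Fintype.card V : ℝ)^L := by
      rintro ⟨c, w⟩ _
      by_cases hc : Function.Injective c
      · have hm := ca_marginal (V := V) L c hc (fun g => caBad q m g w)
        have hm' : (#(univ.filter (fun M : Fin L → V => caBad q m (M ∘ c) w)) : ℝ) * 
          (Fintype.card V : ℝ)^3 = (Fintype.card V : ℝ)^L * #(univ.filter (fun g => caBad q m g w)) := by
          exact_mod_cast hm
        have e : ∑ M : Fin L → V, 
          (if Function.Injective c ∧ caBad q m (M ∘ c) w then (1:ℝ) else 0) = 
           (#(univ.filter (fun M : Fin L → V => caBad q m (M ∘ c) w)) : ℝ) := by simp [hc]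
        simp only
        rw [e]
        apply le_of_mul_le_mul_right _ (show (0:ℝ) < (Fintype.card V : ℝ)^3 by positivity)
        rw [hm']
        calc _ ≤ (Fintype.card V : ℝ)^L * (P * (Fintype.card V : ℝ)^3) := by gcongr; exact hP w
          _ = _ := by ring
      · simp [hc]; positivity
    refine (sum_le_sum s2).trans ?_
    simp only [sum_const, nsmul_eq_mul, card_univ, Fintype.card_prod, Fintype.card_fun, Fintype.card_fin]
    push_cast
    simp only [L]
    push_cast
    have : (0:ℝ) ≤ (Fintype.card V : ℝ)^(2*n) * n := by positivity
    calc _ = (8 * (n:ℝ)^2 * (q:ℝ)^3 * P) * ((Fintype.card V : ℝ)^(2*n) * n) := by ring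
      _ ≤ 1 * ((Fintype.card V : ℝ)^(2*n) * n) := by gcongr
      _ = _ := by ring
  obtain ⟨M, -, hM⟩ := Finset.exists_le_of_sum_le (s := (univ : Finset (Fin L → V))) ⟨fun _ => 1, mem_univ _⟩ hsum
  have hM' : #(bad M) ≤ n := by exact_mod_cast hM
  let del : Finset (Fin L) := (bad M).image (fun p => p.1 0)
  have hdel : #del ≤ n := card_image_le.trans hM'
  have hkeep : n ≤ #(delᶜ) := by rw [card_compl, Fintype.card_fin]; omega
  let f : Fin n → Fin L := fun i => (delᶜ).orderEmbOfCardLe hkeep i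
  have hf : Function.Injective f := ((delᶜ).orderEmbOfCardLe hkeep).injective
  have hfm : ∀ i, f i ∉ del := fun i => by
    have := (delᶜ).orderEmbOfCardLe_mem hkeep i
    simpa using this
  let e : Fin (q*m) ≃ Fin q × Fin m := finProdFinEquiv.symm
  refine ⟨fun r i => (M (f i) (e r)).1, ?_⟩
  intro c hc w
  by_contra hcon
  apply hfm (c 0)
  refine mem_image.2 ⟨(f ∘ c, w), ?_, rfl⟩
  simp only [bad, mem_filter, mem_univ, true_and]
  refine ⟨hf.comp hc, ?_⟩
  intro r hr
  exact hcon ⟨e.symm r, fun i => by simpa using hr i⟩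

end

theorem covering_array_3_q (q : ℕ) (hq : 2 ≤ q)
    (A : ℝ) (hA : A = (((q : ℝ) + 1) - Real.sqrt (((q : ℝ) + 1) ^ 2 - 4)) / 2)
    (D : ℝ)
    (hD : D = (((q : ℝ) - 1) ^ (3 * ((q : ℝ) - 1)) * ((q : ℝ) - A) ^ ((q : ℝ) - A)) /
      ((q : ℝ) ^ (2 * (q : ℝ)) * A ^ A * (1 - A) ^ (2 * (1 - A)) *
        ((q : ℝ) - 2 + A) ^ ((q : ℝ) - 2 + A) * ((q : ℝ) - 1 - A) ^ ((q : ℝ) - 1 - A)))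
    (B : ℝ) (hB : B = 2 * (q : ℝ) / (Real.log (1 / D) / Real.log 2)) :
    ∀ ε : ℝ, 0 < ε → ∃ N : ℕ, ∀ n : ℕ, N ≤ n →
      ∃ k : ℕ, (k : ℝ) ≤ B * (1 + ε) * (Real.log n / Real.log 2) ∧
        ∃ M : Fin k → Fin n → Fin q,
          ∀ c : Fin 3 → Fin n, Function.Injective c →
            ∀ w : Fin 3 → Fin q, ∃ r : Fin k, ∀ i : Fin 3, M r (c i) = w i := by
  intro ε hε
  obtain ⟨hD0, hD1, s, hs, hsD⟩ := ca_logs q hq A hA D hD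
  obtain ⟨N, hN⟩ := ca_asymp q hq D hD0 hD1 ε hε
  refine ⟨N, fun n hn => ?_⟩
  obtain ⟨m, hm1, hm2⟩ := hN n hn
  have hq1 : (0:ℝ) < (q:ℝ) - 1 := by
    have : (2:ℝ) ≤ q := by exact_mod_cast hq
    linarith
  have hq0 : (0:ℝ) < q := by linarith
  refine ⟨q * m, ?_, ?_⟩
  · have hl : 0 < Real.log (1/D) := Real.log_pos (by rw [lt_div_iff₀ hD0]; linarith)
    have hl2 : 0 < Real.log 2 := Real.log_pos (by norm_num)
    have e : B * (1 + ε) * (Real.log n / Real.log 2) =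
        q * (2 * (1+ε) * Real.log n / Real.log (1/D)) := by
      rw [hB]; field_simp
    rw [e]; push_cast
    gcongr
  · apply ca_select q m n (((q:ℝ)*m+1)^2 * D^m) (by positivity) _ hm2
    apply caBad_count
    intro Y1 hY1
    have h1 := ca_triples q m hq (by simp) Y1 hY1 s hs
    have h2 := ca_choose_lower q m hq
    set T := (∑ Y2 ∈ Finset.powersetCard m (Finset.univ : Finset (Fin q × Fin m)),
      ∑ Y3 ∈ Finset.powersetCard m Finset.univ,
      (if Y1 ∩ Y2 ∩ Y3 = ∅ then (1:ℝ) else 0)) with hT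
    set C : ℝ := ((q*m).choose m : ℝ) with hC
    set G : ℝ := ((q:ℝ)-1)^((q-1)*m) with hG
    have hGpos : 0 < G := by positivity
    have h3 : (1+2*s)^m * ((1+s)^2)^((q-1)*m) * G^2 = (s^2)^m * D^m * ((q:ℝ)^(q*m))^2 := by
      have := congrArg (fun x => x^m) hsD
      simp only [mul_pow] at this
      rw [hG, pow_mul ((1+s)^2), pow_mul ((q:ℝ)-1), pow_mul (q:ℝ)]
      rw [pow_right_comm _ m 2, pow_right_comm _ m 2]
      exact this
    have h4 : ((q:ℝ)^(q*m))^2 ≤ (((q:ℝ)*m+1) * G * C)^2 := by gcongr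
    have hpos : (0:ℝ) < (s^2)^m * G^2 := by positivity
    apply le_of_mul_le_mul_right _ hpos
    calc T * ((s^2)^m * G^2) = (T * (s^2)^m) * G^2 := by ring
      _ ≤ ((1+2*s)^m * ((1+s)^2)^((q-1)*m)) * G^2 := by gcongr
      _ = (s^2)^m * D^m * ((q:ℝ)^(q*m))^2 := h3
      _ ≤ (s^2)^m * D^m * (((q:ℝ)*m+1) * G * C)^2 := by gcongr
      _ = _ := by ring
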